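/- Let G be a finite group of order p^{2n} with n < 4, p prime, and [c] ∈ H²(G, ℂ*) any cohomology class. Then [c] admits a normal (abelian) isotropic subgroup of order p^n. Consequently, every non-degenerate class on a nilpotent group whose order is free of eighth powers admits a normal Lagrangian. -/

import Mathlib

/-!
A `2`-cocycle `c` on `G` with values in `M = Kˣ` defines a central extension `Γ` of `G` by `M`. As
`M` is divisible, `A ≤ G` is isotropic as soon as its preimage in `Γ` is commutative, because the
central extension of `A` by `M` then splits.

For a `p`-group `G`, grow a commutative normal subgroup `N ≥ M` of `Γ` one factor `p` at a time: if
`N` is smaller than its centralizer `C`, adjoin some `w ∈ C` that is central of order `p` modulo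
`N`. On `C`, `g ↦ ⁅w, g⁆` is a homomorphism into the `p`-torsion of `N`, which has at most
`p * |N : M|` elements since the torsion of `M` is locally cyclic. So once `|N : M| = p ^ m` the
centralizer has index at most `p ^ (1 + 2 + ⋯ + m)`, and the construction reaches `p ^ m` as soon as
`|G|` is at least `p ^ (m + 1).choose 2`. Sylow subgroups reduce nilpotent groups to `p`-groups.

If `c` is non-degenerate, `x ≠ 1` has trace zero on every `c`-twisted representation `W` of `G`, so
`G` acts on `W` by linearly independent operators. If `W` is irreducible these span `End W` by
Burnside's theorem, whence `|G| = (dim W) ^ 2`, and a Lagrangian is an isotropic subgroup of order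
`dim W`.
-/

open Subgroup
open scoped commutatorElement

section CentralExtension

variable {Γ : Type*} [Group Γ]

theorem normal_of_le_center {H : Subgroup Γ} (hH : H ≤ center Γ) : H.Normal :=
  commutator_top_left_le_iff.1 ((commutator_top_left_eq_bot_iff_le_center.2 hH).trans_le bot_le)

theorem relIndex_eq_card_map_mk' (N H : Subgroup Γ) [N.Normal] :
    N.relIndex H = Nat.card (H.map (QuotientGroup.mk' N)) := by
  rw [← relIndex_ker, QuotientGroup.ker_mk']

theorem relIndex_dvd_relIndex_of_le_right {N H K : Subgroup Γ} [N.Normal] (hHK : H ≤ K) :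
    N.relIndex H ∣ N.relIndex K := by
  rw [relIndex_eq_card_map_mk', relIndex_eq_card_map_mk']
  exact card_dvd_of_le (map_mono hHK)

theorem inf_center_ne_bot [Group.IsNilpotent Γ] {H : Subgroup Γ} [H.Normal] (hH : H ≠ ⊥) :
    H ⊓ center Γ ≠ ⊥ := by
  have hex : ∃ n, H ⊓ Subgroup.upperCentralSeries Γ n ≠ ⊥ :=
    (Group.IsNilpotent.nilpotent Γ).imp fun n hn ↦ by rwa [hn, inf_top_eq]
  classical
  obtain ⟨n, hn⟩ : ∃ n, Nat.find hex = n + 1 :=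
    Nat.exists_eq_succ_of_ne_zero fun h0 ↦ Nat.find_spec hex (by simp [h0])
  have hbot : H ⊓ Subgroup.upperCentralSeries Γ n = ⊥ := not_not.1 (Nat.find_min hex (by lia))
  obtain ⟨y, ⟨hyH, hyn⟩, hy1⟩ := (bot_or_exists_ne_one _).resolve_left (hn ▸ Nat.find_spec hex)
  refine ne_bot_iff_exists_ne_one.2
    ⟨⟨y, hyH, mem_center_iff.2 fun g ↦ ?_⟩, Subtype.coe_ne_coe.1 hy1⟩
  have hcomm : ⁅y, g⁆ ∈ H ⊓ Subgroup.upperCentralSeries Γ n :=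
    ⟨commutator_le_left H ⊤ (commutator_mem_commutator hyH (mem_top g)), hyn g⟩
  rw [hbot, mem_bot, commutatorElement_eq_one_iff_mul_comm] at hcomm
  exact hcomm.symm

theorem exists_mem_center_orderOf_eq [Group.IsNilpotent Γ] {p : ℕ} [Fact p.Prime]
    {H : Subgroup Γ} [H.Normal] (hp : IsPGroup p H) (hH : H ≠ ⊥) :
    ∃ y ∈ H, y ∈ center Γ ∧ orderOf y = p := by
  obtain ⟨y, ⟨hyH, hyc⟩, hy1⟩ := (bot_or_exists_ne_one _).resolve_left (inf_center_ne_bot hH)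
  obtain ⟨k, hk⟩ := IsPGroup.iff_orderOf.1 hp ⟨y, hyH⟩
  rw [orderOf_mk] at hk
  have hpy : p ∣ orderOf y := hk ▸ dvd_pow_self p fun h0 ↦ hy1 (by simpa [h0] using hk)
  have hy0 : orderOf y ≠ 0 := hk ▸ pow_ne_zero k (Fact.out (p := p.Prime)).ne_zero
  exact ⟨y ^ (orderOf y / p), pow_mem hyH _, pow_mem hyc _, orderOf_pow_orderOf_div hy0 hpy⟩

theorem exists_central_mod [Group.IsNilpotent Γ] {p k : ℕ} [Fact p.Prime] {N C : Subgroup Γ}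
    [N.Normal] [C.Normal] (hNC : N.relIndex C ∣ p ^ k) (hC : ¬ C ≤ N) :
    ∃ w ∈ C, (w : Γ ⧸ N) ∈ center (Γ ⧸ N) ∧ orderOf (w : Γ ⧸ N) = p := by
  obtain ⟨j, -, hj⟩ := (Nat.dvd_prime_pow Fact.out).1 hNC
  rw [relIndex_eq_card_map_mk'] at hj
  have : (C.map (QuotientGroup.mk' N)).Normal :=
    Normal.map inferInstance _ (QuotientGroup.mk'_surjective N)
  have hne : C.map (QuotientGroup.mk' N) ≠ ⊥ := by
    rwa [Ne, Subgroup.map_eq_bot_iff, QuotientGroup.ker_mk']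
  obtain ⟨_, ⟨w, hw, rfl⟩, hcen, hord⟩ := exists_mem_center_orderOf_eq (.of_card hj) hne
  exact ⟨w, hw, hcen, hord⟩

theorem card_le_of_forall_pow_eq_one {Z N R : Subgroup Γ} {p : ℕ} (hp : 0 < p)
    (hZ : ∀ S ≤ Z, Finite S → IsCyclic S) (hN : Z.relIndex N ≠ 0) (hRN : R ≤ N)
    (hR : ∀ r ∈ R, r ^ p = 1) : Nat.card R ≤ p * Z.relIndex N := by
  have hRZ : Nat.card ↥(Z ⊓ R) ≤ p := by
    obtain hfin | hinf := finite_or_infinite ↥(Z ⊓ R)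
    · have := hZ _ inf_le_left hfin
      rw [← IsCyclic.exponent_eq_card]
      exact Nat.le_of_dvd hp (Monoid.exponent_dvd_of_forall_pow_eq_one
        fun r ↦ Subtype.ext (hR r r.2.2))
    · exact Nat.card_eq_zero_of_infinite.trans_le p.zero_le
  calc Nat.card R = Nat.card ↥(Z ⊓ R) * Z.relIndex R := by
        rw [← relIndex_bot_left, ← relIndex_bot_left, relIndex_inf_mul_relIndex, bot_inf_eq]
    _ ≤ p * Z.relIndex N := Nat.mul_le_mul hRZ (relIndex_le_of_le_right hRN hN)

/-- The homomorphism `g ↦ ⁅w, g⁆` on the elements `g` of `H`; it is multiplicative because `H`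
centralizes all these commutators. -/
def commutatorHom (w : Γ) (H : Subgroup Γ) (hw : ∀ g ∈ H, ⁅w, g⁆ ∈ centralizer (H : Set Γ)) :
    H →* Γ where
  toFun g := ⁅w, (g : Γ)⁆
  map_one' := commutatorElement_one_right w
  map_mul' g h := by
    rw [coe_mul, commutatorElement_mul_right_eq_mul_conj, mul_assoc _ (g : Γ),
      mem_centralizer_iff.1 (hw h h.2) g g.2, mul_assoc, mul_assoc, mul_inv_cancel, mul_one]

theorem ker_commutatorHom (w : Γ) (H : Subgroup Γ)
    (hw : ∀ g ∈ H, ⁅w, g⁆ ∈ centralizer (H : Set Γ)) :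
    (commutatorHom w H hw).ker = (centralizer {w}).subgroupOf H := by
  ext g
  rw [MonoidHom.mem_ker, mem_subgroupOf, mem_centralizer_singleton_iff, eq_comm (a := _ * w)]
  exact commutatorElement_eq_one_iff_mul_comm

theorem relIndex_centralizer_singleton_le {Z N H : Subgroup Γ} {w : Γ} {p : ℕ} (hp : 0 < p)
    (hZ : ∀ S ≤ Z, Finite S → IsCyclic S) (hN : Z.relIndex N ≠ 0)
    (hH : H ≤ centralizer (N : Set Γ)) (hw : w ∈ centralizer (N : Set Γ)) (hwp : w ^ p ∈ N)
    (hcomm : ∀ g ∈ H, ⁅w, g⁆ ∈ N) :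
    (centralizer {w}).relIndex H ≤ p * Z.relIndex N := by
  have hNH := le_centralizer_iff.1 hH
  rw [relIndex, ← ker_commutatorHom w H fun g hg ↦ hNH (hcomm g hg), index_ker]
  refine card_le_of_forall_pow_eq_one hp hZ hN ?_ ?_
  · rintro _ ⟨g, rfl⟩
    exact hcomm g g.2
  · rintro _ ⟨g, rfl⟩
    have hcw : Commute ⁅w, (g : Γ)⁆ w := mem_centralizer_iff.1 hw _ (hcomm g g.2)
    have hconj : (g : Γ) * w⁻¹ * (g : Γ)⁻¹ = w⁻¹ * ⁅w, (g : Γ)⁆ := by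
      simp only [commutatorElement_def, ← mul_assoc, inv_mul_cancel, one_mul]
    have hpow : (w ^ p)⁻¹ = (w ^ p)⁻¹ * ⁅w, (g : Γ)⁆ ^ p := by
      calc (w ^ p)⁻¹ = g * (w ^ p)⁻¹ * (g : Γ)⁻¹ := by
            rw [← mem_centralizer_iff.1 (hH g.2) _ (inv_mem hwp), mul_inv_cancel_right]
        _ = _ := by rw [← inv_pow, ← conj_pow, hconj, hcw.symm.inv_left.mul_pow]
    exact left_eq_mul.1 hpow

theorem normal_sup_zpowers {N : Subgroup Γ} [N.Normal] {w : Γ}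
    (hw : (w : Γ ⧸ N) ∈ center (Γ ⧸ N)) : (N ⊔ zpowers w).Normal := by
  rw [← QuotientGroup.comap_map_mk', MonoidHom.map_zpowers]
  exact (normal_of_le_center (zpowers_le.2 hw)).comap _

theorem relIndex_sup_zpowers (N : Subgroup Γ) [N.Normal] (w : Γ) :
    N.relIndex (N ⊔ zpowers w) = orderOf (w : Γ ⧸ N) := by
  rw [relIndex_sup_left, relIndex_eq_card_map_mk', MonoidHom.map_zpowers, Nat.card_zpowers,
    QuotientGroup.mk'_apply]

theorem centralizer_sup (H K : Subgroup Γ) :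
    centralizer ((H ⊔ K : Subgroup Γ) : Set Γ) = centralizer (H : Set Γ) ⊓ centralizer K := by
  refine le_antisymm (le_inf (centralizer_le (SetLike.coe_subset_coe.2 le_sup_left))
    (centralizer_le (SetLike.coe_subset_coe.2 le_sup_right))) ?_
  rw [le_centralizer_iff]
  exact sup_le (le_centralizer_iff.1 inf_le_left) (le_centralizer_iff.1 inf_le_right)

theorem centralizer_sup_zpowers (N : Subgroup Γ) (w : Γ) :
    centralizer ((N ⊔ zpowers w : Subgroup Γ) : Set Γ) =
      centralizer (N : Set Γ) ⊓ centralizer {w} := by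
  rw [centralizer_sup, zpowers_eq_closure, centralizer_closure]

theorem sup_le_centralizer_sup {H K : Subgroup Γ} (hH : H ≤ centralizer (H : Set Γ))
    (hK : K ≤ centralizer (K : Set Γ)) (hHK : H ≤ centralizer (K : Set Γ)) :
    H ⊔ K ≤ centralizer ((H ⊔ K : Subgroup Γ) : Set Γ) := by
  rw [centralizer_sup]
  exact le_inf (sup_le hH (le_centralizer_iff.1 hHK)) (sup_le hHK hK)

theorem exists_normal_centralizer_relIndex_le [Group.IsNilpotent Γ] {p k : ℕ} (hp : p.Prime)
    {Z N P : Subgroup Γ} [N.Normal] [P.Normal] (hZ : ∀ S ≤ Z, Finite S → IsCyclic S)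
    (hZc : Z ≤ center Γ) (hZN : Z ≤ N) (hNP : N ≤ P) (hN : N ≤ centralizer (N : Set Γ))
    (hP : Z.relIndex P = p ^ k)
    (hlt : (centralizer (N : Set Γ)).relIndex P < N.relIndex P) :
    ∃ N' : Subgroup Γ, N'.Normal ∧ N ≤ N' ∧ N' ≤ P ∧ N' ≤ centralizer (N' : Set Γ) ∧
      N.relIndex N' = p ∧ (centralizer (N' : Set Γ)).relIndex P ≤
        p * Z.relIndex N * (centralizer (N : Set Γ)).relIndex P := by
  have := Fact.mk hp
  set C := centralizer (N : Set Γ)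
  have hP0 : Z.relIndex P ≠ 0 := hP ▸ pow_ne_zero k hp.ne_zero
  have hCP : ¬ C ⊓ P ≤ N := fun hle ↦ hlt.not_ge <| by
    have hC0 : C.relIndex P ≠ 0 :=
      mt (relIndex_eq_zero_of_le_left (hZc.trans (center_le_centralizer _))) hP0
    rw [← inf_relIndex_right C]
    exact relIndex_le_of_le_left hle (by rwa [inf_relIndex_right])
  have hNC : N.relIndex (C ⊓ P) ∣ p ^ k := hP ▸
    (relIndex_dvd_relIndex_of_le_right inf_le_right).trans (relIndex_dvd_of_le_left P hZN)
  obtain ⟨w, ⟨hwC, hwP⟩, hwc, hord⟩ := exists_central_mod hNC hCP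
  have hwp : w ^ p ∈ N := by
    rw [← QuotientGroup.eq_one_iff, QuotientGroup.mk_pow, ← hord, pow_orderOf_eq_one]
  have hcomm (g : Γ) : ⁅w, g⁆ ∈ N := by
    rw [← QuotientGroup.eq_one_iff, ← QuotientGroup.mk'_apply, map_commutatorElement,
      commutatorElement_eq_one_iff_mul_comm]
    exact (mem_center_iff.1 hwc g).symm
  refine ⟨N ⊔ zpowers w, normal_sup_zpowers hwc, le_sup_left, sup_le hNP (zpowers_le.2 hwP),
    sup_le_centralizer_sup hN (le_centralizer _) (le_centralizer_iff.1 (zpowers_le.2 hwC)),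
    (relIndex_sup_zpowers N w).trans hord, ?_⟩
  calc (centralizer ((N ⊔ zpowers w : Subgroup Γ) : Set Γ)).relIndex P
      = (centralizer {w}).relIndex (C ⊓ P) * C.relIndex P := by
        rw [centralizer_sup_zpowers, inf_comm, relIndex_inf_mul_relIndex]
    _ ≤ p * Z.relIndex N * C.relIndex P :=
        Nat.mul_le_mul_right _ <| relIndex_centralizer_singleton_le hp.pos hZ
          (mt (relIndex_eq_zero_of_le_right hNP) hP0) inf_le_left hwC hwp fun g _ ↦ hcomm g

theorem exists_normal_commutative_relIndex_eq_pow [Group.IsNilpotent Γ] {p m k : ℕ} (hp : p.Prime)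
    (hmk : (m + 1).choose 2 ≤ k) {Z P : Subgroup Γ} [P.Normal]
    (hZ : ∀ S ≤ Z, Finite S → IsCyclic S) (hZc : Z ≤ center Γ) (hZP : Z ≤ P)
    (hP : Z.relIndex P = p ^ k) :
    ∃ N : Subgroup Γ, N.Normal ∧ Z ≤ N ∧ N ≤ P ∧ N ≤ centralizer (N : Set Γ) ∧
      Z.relIndex N = p ^ m ∧ (centralizer (N : Set Γ)).relIndex P ≤ p ^ (m + 1).choose 2 := by
  induction m with
  | zero =>
    refine ⟨Z, normal_of_le_center hZc, le_rfl, hZP, hZc.trans (center_le_centralizer _),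
      relIndex_self Z, ?_⟩
    rw [centralizer_eq_top_iff_subset.2 hZc, relIndex_top_left]
    exact Nat.one_le_pow _ _ hp.pos
  | succ m ih =>
    rw [Nat.choose_succ_succ' (m + 1), Nat.choose_one_right] at hmk ⊢
    obtain ⟨N, hNn, hZN, hNP, hN, hNm, hle⟩ := ih (by lia)
    have hNP' : N.relIndex P = p ^ (k - m) := by
      rw [← Nat.mul_right_inj (pow_ne_zero m hp.ne_zero), ← hNm,
        relIndex_mul_relIndex Z N P hZN hNP, hP, hNm, ← pow_add, Nat.add_sub_cancel' (by lia)]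
    have hlt : (centralizer (N : Set Γ)).relIndex P < N.relIndex P :=
      hle.trans_lt (hNP' ▸ Nat.pow_lt_pow_right hp.one_lt (by lia))
    obtain ⟨N', hN'n, hNN', hN'P, hN', hrel, hle'⟩ :=
      exists_normal_centralizer_relIndex_le hp hZ hZc hZN hNP hN hP hlt
    refine ⟨N', hN'n, hZN.trans hNN', hN'P, hN', ?_, hle'.trans ?_⟩
    · rw [← relIndex_mul_relIndex Z N N' hZN hNN', hNm, hrel, pow_succ]
    · rw [hNm, ← pow_succ', pow_add p (m + 1)]
      exact Nat.mul_le_mul_left _ hle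

theorem orderOf_commutatorElement_dvd_relIndex {Z H : Subgroup Γ} {w g : Γ} (hZ : Z ≤ center Γ)
    (hw : ∀ h ∈ H, ⁅w, h⁆ ∈ center Γ) (hg : g ∈ H) : orderOf ⁅w, g⁆ ∣ Z.relIndex H := by
  have := normal_of_le_center hZ
  let φ := commutatorHom w H fun h hh ↦ center_le_centralizer _ (hw h hh)
  have hgZ : (⟨g, hg⟩ : H) ^ Z.relIndex H ∈ φ.ker := by
    rw [ker_commutatorHom]
    exact hZ.trans (center_le_centralizer _) (pow_index_mem (Z.subgroupOf H) _)
  rw [orderOf_dvd_iff_pow_eq_one]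
  exact (map_pow φ _ _).symm.trans hgZ

theorem inf_le_of_coprime_relIndex {Z A B : Subgroup Γ} [Z.Normal]
    (hAB : (Z.relIndex A).Coprime (Z.relIndex B)) : A ⊓ B ≤ Z :=
  relIndex_eq_one.1 <| Nat.eq_one_of_dvd_coprimes hAB
    (relIndex_dvd_relIndex_of_le_right inf_le_left) (relIndex_dvd_relIndex_of_le_right inf_le_right)

theorem le_centralizer_of_coprime_relIndex {Z A B : Subgroup Γ} [A.Normal] [B.Normal]
    (hZ : Z ≤ center Γ) (hAB : (Z.relIndex A).Coprime (Z.relIndex B)) :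
    A ≤ centralizer (B : Set Γ) := by
  have := normal_of_le_center hZ
  have hcen : ⁅A, B⁆ ≤ center Γ :=
    (commutator_le_inf A B).trans ((inf_le_of_coprime_relIndex hAB).trans hZ)
  rw [← commutator_eq_bot_iff_le_centralizer, eq_bot_iff, commutator_le]
  intro a ha b hb
  have hdvdB := orderOf_commutatorElement_dvd_relIndex hZ
    (fun b hb ↦ hcen (commutator_mem_commutator ha hb)) hb
  have hdvdA := orderOf_commutatorElement_dvd_relIndex hZ (fun a ha ↦ hcen
    (commutator_comm B A ▸ commutator_mem_commutator hb ha)) ha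
  rw [← commutatorElement_inv, orderOf_inv] at hdvdA
  exact mem_bot.2 (orderOf_eq_one_iff.1 (Nat.eq_one_of_dvd_coprimes hAB hdvdA hdvdB))

theorem relIndex_sup_of_coprime {Z A B : Subgroup Γ} [Z.Normal] [A.Normal] (hZA : Z ≤ A)
    (hZB : Z ≤ B) (hAB : (Z.relIndex A).Coprime (Z.relIndex B)) :
    Z.relIndex (A ⊔ B) = Z.relIndex A * Z.relIndex B := by
  have hinf : A ⊓ B = Z := le_antisymm (inf_le_of_coprime_relIndex hAB) (le_inf hZA hZB)
  rw [← relIndex_mul_relIndex Z A _ hZA le_sup_left, relIndex_sup_left, ← inf_relIndex_right A B,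
    hinf]

theorem exists_normal_relIndex_eq_pow_factorization [Group.IsNilpotent Γ] {Z : Subgroup Γ}
    [Z.Normal] {p : ℕ} (hp : p.Prime) (hZ : Z.index ≠ 0) :
    ∃ P : Subgroup Γ, P.Normal ∧ Z ≤ P ∧ Z.relIndex P = p ^ Z.index.factorization p := by
  have := Fact.mk hp
  have : Finite (Γ ⧸ Z) := Nat.finite_of_card_ne_zero hZ
  let S : Sylow p (Γ ⧸ Z) := default
  refine ⟨S.comap (QuotientGroup.mk' Z), Normal.comap inferInstance _, ?_, ?_⟩
  · exact (QuotientGroup.ker_mk' Z).ge.trans (ker_le_comap _ _)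
  · rw [relIndex_eq_card_map_mk', map_comap_eq_self_of_surjective (QuotientGroup.mk'_surjective Z),
      S.card_eq_multiplicity, index]

theorem exists_normal_commutative_relIndex_eq [Group.IsNilpotent Γ] {Z : Subgroup Γ}
    (hZ : ∀ S ≤ Z, Finite S → IsCyclic S) (hZc : Z ≤ center Γ) {d : ℕ} (hd : d ≠ 0)
    (hdZ : ∀ p : ℕ, p.Prime → (d.factorization p + 1).choose 2 ≤ Z.index.factorization p) :
    ∃ N : Subgroup Γ, N.Normal ∧ Z ≤ N ∧ N ≤ centralizer (N : Set Γ) ∧ Z.relIndex N = d := by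
  have hZn := normal_of_le_center hZc
  induction d using Nat.recOnPosPrimePosCoprime with
  | zero => exact absurd rfl hd
  | one => exact ⟨Z, hZn, le_rfl, hZc.trans (center_le_centralizer _), relIndex_self Z⟩
  | prime_pow p m hp hm =>
    have hmk := hdZ p hp
    rw [hp.factorization_pow, Finsupp.single_eq_same] at hmk
    have hidx : Z.index ≠ 0 := fun h0 ↦ by
      rw [h0, Nat.factorization_zero, Finsupp.zero_apply, Nat.le_zero,
        Nat.choose_eq_zero_iff] at hmk
      lia
    obtain ⟨P, hPn, hZP, hP⟩ := exists_normal_relIndex_eq_pow_factorization hp hidx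
    obtain ⟨N, hNn, hZN, -, hN, hNm, -⟩ :=
      exists_normal_commutative_relIndex_eq_pow hp hmk hZ hZc hZP hP
    exact ⟨N, hNn, hZN, hN, hNm⟩
  | coprime a b ha hb hab iha ihb =>
    have hfac (p : ℕ) := congrArg (· p) (Nat.factorization_mul (by lia : a ≠ 0) (by lia : b ≠ 0))
    simp only [Finsupp.add_apply] at hfac
    obtain ⟨A, hAn, hZA, hA, rfl⟩ := iha (by lia) fun p hp ↦
      (Nat.choose_le_choose 2 (by rw [hfac]; lia)).trans (hdZ p hp)
    obtain ⟨B, hBn, hZB, hB, rfl⟩ := ihb (by lia) fun p hp ↦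
      (Nat.choose_le_choose 2 (by rw [hfac]; lia)).trans (hdZ p hp)
    exact ⟨A ⊔ B, sup_normal A B, hZA.trans le_sup_left,
      sup_le_centralizer_sup hA hB (le_centralizer_of_coprime_relIndex hZc hab),
      relIndex_sup_of_coprime hZA hZB hab⟩

end CentralExtension

section Cocycle

variable {G M : Type*} [Group G] [CommGroup M]

/-- A `2`-cocycle on `G` with values in a commutative group `M` on which `G` acts trivially. -/
def IsTwoCocycle (c : G → G → M) : Prop :=
  ∀ g h k : G, c g h * c (g * h) k = c h k * c g (h * k)

/-- The class of the cocycle `c` restricts trivially to `A`: the restriction of `c` is the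
coboundary of some `f`. -/
def IsIsotropic (c : G → G → M) (A : Subgroup G) : Prop :=
  ∃ f : A → M, ∀ a b : A, c (a : G) (b : G) = f a * f b * (f (a * b))⁻¹

/-- Non-degeneracy of the class of `c`, in terms of the alternating pairing `c x g / c g x` of
commuting elements, which depends only on the class. -/
def IsNondegenerate (c : G → G → M) : Prop :=
  ∀ x : G, x ≠ 1 → ∃ g : G, x * g = g * x ∧ c x g ≠ c g x

variable {c : G → G → M}

theorem IsTwoCocycle.map_one_left (hc : IsTwoCocycle c) (g : G) : c 1 g = c 1 1 := by
  simpa only [one_mul, mul_left_inj, mul_right_inj, eq_comm] using hc 1 1 g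

theorem IsTwoCocycle.map_one_right (hc : IsTwoCocycle c) (g : G) : c g 1 = c 1 1 := by
  simpa only [mul_one, mul_left_inj, mul_right_inj] using hc g 1 1

/-- The central extension of `G` by `M` defined by the cocycle `c`: the pairs `(m, g)`, multiplied
by `(m, g) * (n, h) = (m * n * c g h, g * h)`. -/
@[ext]
structure TwistedProduct (hc : IsTwoCocycle c) where
  fiber : M
  base : G

namespace TwistedProduct

variable (hc : IsTwoCocycle c)

instance : Mul (TwistedProduct hc) :=
  ⟨fun x y ↦ ⟨x.fiber * y.fiber * c x.base y.base, x.base * y.base⟩⟩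

-- `c` is not normalised, so the neutral element is `(c 1 1)⁻¹` rather than `1` on the fibre.
instance : One (TwistedProduct hc) :=
  ⟨⟨(c 1 1)⁻¹, 1⟩⟩

instance : Inv (TwistedProduct hc) :=
  ⟨fun x ↦ ⟨x.fiber⁻¹ * (c x.base⁻¹ x.base)⁻¹ * (c 1 1)⁻¹, x.base⁻¹⟩⟩

variable {hc}

theorem mul_def (x y : TwistedProduct hc) :
    x * y = ⟨x.fiber * y.fiber * c x.base y.base, x.base * y.base⟩ := rfl

theorem one_def : (1 : TwistedProduct hc) = ⟨(c 1 1)⁻¹, 1⟩ := rfl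

theorem inv_def (x : TwistedProduct hc) :
    x⁻¹ = ⟨x.fiber⁻¹ * (c x.base⁻¹ x.base)⁻¹ * (c 1 1)⁻¹, x.base⁻¹⟩ := rfl

instance : Group (TwistedProduct hc) :=
  Group.ofLeftAxioms
    (fun x y z ↦ by
      ext
      · calc x.fiber * y.fiber * c x.base y.base * z.fiber * c (x.base * y.base) z.base
            = x.fiber * y.fiber * z.fiber * (c x.base y.base * c (x.base * y.base) z.base) := by
              ac_rfl
          _ = x.fiber * (y.fiber * z.fiber * c y.base z.base) * c x.base (y.base * z.base) := by
              rw [hc]; ac_rfl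
      · exact mul_assoc _ _ _)
    (fun x ↦ by
      ext
      · simp only [mul_def, one_def, hc.map_one_left, inv_mul_cancel_comm]
      · exact one_mul _)
    (fun x ↦ by
      ext
      · simp only [mul_def, one_def, inv_def]
        rw [mul_right_comm, mul_right_comm _ _ (c _ _), inv_mul_cancel_right, inv_mul_cancel_comm]
      · exact inv_mul_cancel _)

/-- The projection of the extension onto `G`. -/
def proj (hc : IsTwoCocycle c) : TwistedProduct hc →* G where
  toFun := base
  map_one' := rfl
  map_mul' _ _ := rfl

/-- The inclusion of the central subgroup `M`; the factor `(c 1 1)⁻¹` matches the neutral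
element. -/
def incl (hc : IsTwoCocycle c) : M →* TwistedProduct hc where
  toFun m := ⟨m * (c 1 1)⁻¹, 1⟩
  map_one' := by rw [one_mul, one_def]
  map_mul' m n := by
    simp only [mul_def, mul_one, TwistedProduct.mk.injEq, and_true]
    rw [mul_mul_mul_comm, ← mul_assoc, inv_mul_cancel_right]

theorem incl_injective : Function.Injective (incl hc) := fun _ _ h ↦
  mul_right_cancel (congrArg fiber h)

theorem proj_surjective : Function.Surjective (proj hc) := fun g ↦ ⟨⟨1, g⟩, rfl⟩

theorem ker_proj : (proj hc).ker = (incl hc).range := by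
  ext x
  refine ⟨fun hx ↦ ⟨x.fiber * c 1 1, ?_⟩, ?_⟩
  · ext
    · exact mul_inv_cancel_right _ _
    · exact hx.symm
  · rintro ⟨m, rfl⟩
    rfl

theorem incl_mul (m : M) (x : TwistedProduct hc) : incl hc m * x = ⟨m * x.fiber, x.base⟩ := by
  ext
  · change m * (c 1 1)⁻¹ * x.fiber * c 1 x.base = m * x.fiber
    rw [hc.map_one_left x.base, mul_right_comm m, inv_mul_cancel_right]
  · exact one_mul _

theorem mul_incl (m : M) (x : TwistedProduct hc) : x * incl hc m = ⟨m * x.fiber, x.base⟩ := by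
  ext
  · change x.fiber * (m * (c 1 1)⁻¹) * c x.base 1 = m * x.fiber
    rw [hc.map_one_right x.base, ← mul_assoc, inv_mul_cancel_right, mul_comm]
  · exact mul_one _

theorem ker_proj_le_center : (proj hc).ker ≤ center (TwistedProduct hc) := by
  rw [ker_proj]
  rintro _ ⟨m, rfl⟩
  exact mem_center_iff.2 fun x ↦ by rw [incl_mul, mul_incl]

theorem section_mul (g h : G) :
    (⟨1, g⟩ * ⟨1, h⟩ : TwistedProduct hc) = incl hc (c g h) * ⟨1, g * h⟩ := by
  rw [incl_mul, mul_def, one_mul, one_mul, mul_one]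

instance isNilpotent [Group.IsNilpotent G] : Group.IsNilpotent (TwistedProduct hc) :=
  Subgroup.isNilpotent_of_ker_le_center (proj hc) ker_proj_le_center

end TwistedProduct

theorem exists_leftInverse_of_rootableBy {N : Type*} [CommGroup N] [RootableBy M ℕ] {ι : M →* N}
    (hι : Function.Injective ι) : ∃ r : N →* M, Function.LeftInverse r ι := by
  let := Group.rootableByIntOfRootableByNat M
  let : DivisibleBy (Additive M) ℤ :=
    { div := fun x n ↦ .ofMul (RootableBy.root x.toMul n)
      div_zero := fun x ↦ RootableBy.root_zero x.toMul
      div_cancel := fun {_} x hn ↦ RootableBy.root_cancel x.toMul hn }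
  obtain ⟨r, hr⟩ := (Module.Baer.of_divisible (Additive M)).extension_property_addMonoidHom
    ι.toAdditive hι (.id _)
  exact ⟨MonoidHom.toAdditive.symm r, fun m ↦ DFunLike.congr_fun hr (.ofMul m)⟩

open scoped IsMulCommutative in
theorem TwistedProduct.isIsotropic_map_proj [RootableBy M ℕ] {hc : IsTwoCocycle c}
    {N : Subgroup (TwistedProduct hc)} (hMN : (proj hc).ker ≤ N)
    (hN : N ≤ centralizer (N : Set (TwistedProduct hc))) :
    IsIsotropic c (N.map (proj hc)) := by
  have := le_centralizer_iff_isMulCommutative.1 hN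
  have hincl (m : M) : incl hc m ∈ N := hMN (ker_proj.ge ⟨m, rfl⟩)
  have hsec (a : N.map (proj hc)) : (⟨1, a⟩ : TwistedProduct hc) ∈ N := by
    have hle : (N.map (proj hc)).comap (proj hc) ≤ N := by
      rw [comap_map_eq, sup_eq_left.2 hMN]
    exact hle a.2
  obtain ⟨r, hr⟩ := exists_leftInverse_of_rootableBy
    ((MonoidHom.injective_codRestrict (incl hc) N hincl).2 incl_injective)
  refine ⟨fun a ↦ r ⟨_, hsec a⟩, fun a b ↦ eq_mul_inv_of_mul_eq ?_⟩
  rw [← hr (c a b), ← map_mul, ← map_mul]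
  exact congrArg r (Subtype.ext (section_mul (hc := hc) (a : G) b).symm)

theorem isCyclic_of_le_range {Γ : Type*} [Group Γ] {ι : M →* Γ} (hι : Function.Injective ι)
    (hM : ∀ S : Subgroup M, Finite S → IsCyclic S) {S : Subgroup Γ} [Finite S]
    (hS : S ≤ ι.range) : IsCyclic S := by
  obtain ⟨T, rfl⟩ : ∃ T : Subgroup M, T.map ι = S := ⟨S.comap ι, map_comap_eq_self hS⟩
  have e := T.equivMapOfInjective ι hι
  have := hM T (.of_equiv _ e.symm.toEquiv)
  exact isCyclic_of_surjective e e.surjective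

open TwistedProduct in
theorem exists_normal_isIsotropic_card_eq [Group.IsNilpotent G] [RootableBy M ℕ]
    (hM : ∀ S : Subgroup M, Finite S → IsCyclic S) (hc : IsTwoCocycle c) {d : ℕ} (hd : d ≠ 0)
    (hdG : ∀ p : ℕ, p.Prime →
      (d.factorization p + 1).choose 2 ≤ (Nat.card G).factorization p) :
    ∃ A : Subgroup G, A.Normal ∧ Nat.card A = d ∧ IsIsotropic c A := by
  have hcyc : ∀ S ≤ (proj hc).ker, Finite S → IsCyclic S := fun S hS _ ↦
    isCyclic_of_le_range incl_injective hM (ker_proj (hc := hc) ▸ hS)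
  have hidx : (proj hc).ker.index = Nat.card G := by
    rw [index_ker, MonoidHom.range_eq_top.2 proj_surjective, card_top]
  obtain ⟨N, hNn, hZN, hN, rfl⟩ :=
    exists_normal_commutative_relIndex_eq hcyc ker_proj_le_center hd (hidx ▸ hdG)
  exact ⟨N.map (proj hc), hNn.map _ proj_surjective, (relIndex_ker _ _).symm,
    isIsotropic_map_proj hZN hN⟩

end Cocycle

section TwistedHom

open Module

variable {G K : Type*} [Group G] [Field K] {c : G → G → Kˣ}

/-- A representation of `G` in the `K`-algebra `A` twisted by `c`: for `A = End K W` these are the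
projective representations of `G` on `W` with cocycle `c`. As `c` need not be normalised, `1` acts
by the scalar `c 1 1`. -/
structure IsTwistedHom {A : Type*} [Ring A] [Algebra K A] (c : G → G → Kˣ) (u : G → A) :
    Prop where
  map_one : u 1 = c 1 1 • (1 : A)
  map_mul : ∀ g h, u g * u h = c g h • u (g * h)

namespace IsTwistedHom

section Algebra

variable {A : Type*} [Ring A] [Algebra K A] {u : G → A}

theorem isUnit (hu : IsTwistedHom c u) (g : G) : IsUnit (u g) := by
  have hunit (a : Kˣ) : IsUnit (a • u 1) := by
    rw [hu.map_one, smul_smul, Units.smul_def, ← Algebra.algebraMap_eq_smul_one]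
    exact (a * c 1 1).isUnit.map _
  have hr : IsUnit (u g * u g⁻¹) := by
    rw [hu.map_mul, mul_inv_cancel]
    exact hunit _
  have hl : IsUnit (u g⁻¹ * u g) := by
    rw [hu.map_mul, inv_mul_cancel]
    exact hunit _
  obtain ⟨b, hb⟩ := hr.exists_right_inv
  obtain ⟨a, ha⟩ := hl.exists_left_inv
  rw [mul_assoc] at hb
  rw [← mul_assoc] at ha
  exact isUnit_iff_exists_and_exists.2 ⟨⟨_, hb⟩, ⟨_, ha⟩⟩

theorem comp {B : Type*} [Ring B] [Algebra K B] (hu : IsTwistedHom c u) (f : A →ₐ[K] B) :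
    IsTwistedHom c (f ∘ u) where
  map_one := by
    simp only [Function.comp_apply, hu.map_one, Units.smul_def, map_smul, _root_.map_one]
  map_mul g h := by
    simp only [Function.comp_apply, ← _root_.map_mul, hu.map_mul, Units.smul_def, map_smul]

/-- The linear span of a twisted representation, which is closed under multiplication: the image
of the twisted group algebra. -/
def spanSubalgebra (hu : IsTwistedHom c u) : Subalgebra K A :=
  (Submodule.span K (Set.range u)).toSubalgebra
    ((inv_smul_eq_iff.2 hu.map_one).symm ▸
      Submodule.smul_mem _ _ (Submodule.subset_span ⟨1, rfl⟩))
    (fun x y hx hy ↦ by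
      have hxy := Submodule.mul_mem_mul hx hy
      rw [Submodule.span_mul_span] at hxy
      refine Submodule.span_le.2 ?_ hxy
      rintro _ ⟨_, ⟨g, rfl⟩, _, ⟨h, rfl⟩, rfl⟩
      change u g * u h ∈ _
      rw [hu.map_mul]
      exact Submodule.smul_mem _ _ (Submodule.subset_span ⟨g * h, rfl⟩))

/-- A twisted representation with values in its span. -/
def toSpan (hu : IsTwistedHom c u) (g : G) : hu.spanSubalgebra :=
  ⟨u g, Submodule.subset_span ⟨g, rfl⟩⟩

theorem isTwistedHom_toSpan (hu : IsTwistedHom c u) : IsTwistedHom c hu.toSpan where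
  map_one := Subtype.ext hu.map_one
  map_mul g h := Subtype.ext (hu.map_mul g h)

theorem span_range_toSpan (hu : IsTwistedHom c u) :
    Submodule.span K (Set.range hu.toSpan) = ⊤ := by
  refine (Submodule.map_injective_of_injective (f := hu.spanSubalgebra.val.toLinearMap)
    Subtype.val_injective) ?_
  rw [Submodule.map_span, ← Set.range_comp, Submodule.map_top]
  exact (Submodule.range_subtype _).symm

end Algebra

section End

variable {W : Type*} [AddCommGroup W] [Module K W] {u : G → End K W}

theorem trace_eq_zero (hu : IsTwistedHom c u) (hc : IsNondegenerate c) {x : G} (hx : x ≠ 1) :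
    LinearMap.trace K W (u x) = 0 := by
  obtain ⟨g, hxg, hne⟩ := hc x hx
  obtain ⟨v, hv⟩ := hu.isUnit g
  have hconj : c x g • (v * u x * ↑v⁻¹ : End K W) = c g x • u x := by
    calc c x g • (v * u x * ↑v⁻¹ : End K W) = c x g • (u g * u x) * ↑v⁻¹ := by
          rw [hv, smul_mul_assoc]
      _ = c g x • (u x * u g) * ↑v⁻¹ := by
          rw [hu.map_mul, hu.map_mul, hxg, smul_comm]
      _ = c g x • u x := by
          rw [← hv, smul_mul_assoc, Units.mul_inv_cancel_right]
  have htrace := congrArg (LinearMap.trace K W) hconj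
  simp only [Units.smul_def, map_smul, LinearMap.trace_conj, smul_eq_mul] at htrace
  by_contra h0
  exact hne (Units.ext (mul_right_cancel₀ h0 htrace))

theorem linearIndependent [CharZero K] [FiniteDimensional K W] [Nontrivial W]
    (hu : IsTwistedHom c u) (hc : IsNondegenerate c) : LinearIndependent K u := by
  have htrace_one : LinearMap.trace K W (u 1) ≠ 0 := by
    rw [hu.map_one, Units.smul_def, map_smul, LinearMap.trace_one]
    exact mul_ne_zero (c 1 1).ne_zero (Nat.cast_ne_zero.2 finrank_pos.ne')
  refine linearIndependent_iff'.2 fun s a hs g hg ↦ ?_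
  have htrace : LinearMap.trace K W ((∑ x ∈ s, a x • u x) * u g⁻¹) =
      a g * (c g g⁻¹ * LinearMap.trace K W (u 1)) := by
    rw [Finset.sum_mul, map_sum, Finset.sum_eq_single_of_mem g hg]
    · simp only [smul_mul_assoc, hu.map_mul, mul_inv_cancel, Units.smul_def, map_smul, smul_eq_mul]
    · intro x _ hxg
      rw [smul_mul_assoc, hu.map_mul, Units.smul_def, map_smul, map_smul,
        hu.trace_eq_zero hc (mt mul_inv_eq_one.1 hxg), smul_zero, smul_zero]
  rw [hs, zero_mul, map_zero] at htrace
  exact (mul_eq_zero.1 htrace.symm).resolve_right (mul_ne_zero (c g g⁻¹).ne_zero htrace_one)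

end End

end IsTwistedHom

theorem lsmul_surjective_of_isSimpleModule [IsAlgClosed K] {A W : Type*} [Ring A] [Algebra K A]
    [AddCommGroup W] [Module K W] [Module A W] [IsScalarTower K A W] [FiniteDimensional K W]
    [IsSimpleModule A W] : Function.Surjective (Algebra.lsmul K K W : A →ₐ[K] End K W) := by
  intro T
  have hscalar := (IsSimpleModule.algebraMap_end_bijective_of_isAlgClosed K (A := A) (V := W)).2
  let T' : End (End A W) W :=
    { T with
      map_smul' := fun φ w ↦ by
        obtain ⟨t, rfl⟩ := hscalar φ
        exact T.map_smul t w }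
  have : Module.Finite (End A W) W := .of_restrictScalars_finite K _ _
  obtain ⟨a, ha⟩ := Module.Finite.toModuleEnd_moduleEnd_surjective T'
  exact ⟨a, LinearMap.ext fun w ↦ DFunLike.congr_fun ha w⟩

theorem IsTwistedHom.isSquare_card [IsAlgClosed K] [CharZero K] [Finite G] {A : Type*} [Ring A]
    [Algebra K A] [Nontrivial A] {u : G → A} (hu : IsTwistedHom c u)
    (hspan : Submodule.span K (Set.range u) = ⊤) (hc : IsNondegenerate c) :
    IsSquare (Nat.card G) := by
  have : FiniteDimensional K A := .of_fg_top (hspan ▸ Submodule.fg_span (Set.finite_range u))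
  obtain ⟨I, hI⟩ := Ideal.exists_maximal A
  have : IsSimpleModule A (A ⧸ I) := isSimpleModule_iff_isCoatom.2 hI.out
  have : Nontrivial (A ⧸ I) := IsSimpleModule.nontrivial A _
  have hv := hu.comp (Algebra.lsmul K K (A ⧸ I))
  have hv_li := hv.linearIndependent hc
  have hv_span : Submodule.span K (Set.range (Algebra.lsmul K K (A ⧸ I) ∘ u)) = ⊤ := by
    rw [Set.range_comp, ← AlgHom.coe_toLinearMap, ← Submodule.map_span, hspan, Submodule.map_top]
    exact LinearMap.range_eq_top.2 lsmul_surjective_of_isSimpleModule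
  refine ⟨finrank K (A ⧸ I), ?_⟩
  rw [← finrank_linearMap K K, finrank_eq_nat_card_basis (Basis.mk hv_li hv_span.ge)]

/-- The twisted regular representation of `G` on the functions on `G`. -/
def twistedRegular (c : G → G → Kˣ) (g : G) : End K (G → K) where
  toFun φ x := c g (g⁻¹ * x) * φ (g⁻¹ * x)
  map_add' _ _ := funext fun _ ↦ mul_add _ _ _
  map_smul' _ _ := funext fun _ ↦ mul_left_comm _ _ _

theorem isTwistedHom_twistedRegular (hc : IsTwoCocycle c) : IsTwistedHom c (twistedRegular c) where
  map_one := by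
    refine LinearMap.ext fun φ ↦ funext fun x ↦ ?_
    change (c 1 (1⁻¹ * x) : K) * φ (1⁻¹ * x) = c 1 1 * φ x
    rw [inv_one, one_mul, hc.map_one_left]
  map_mul g h := by
    refine LinearMap.ext fun φ ↦ funext fun x ↦ ?_
    change (c g (g⁻¹ * x) : K) * (c h (h⁻¹ * (g⁻¹ * x)) * φ (h⁻¹ * (g⁻¹ * x))) =
      c g h * (c (g * h) ((g * h)⁻¹ * x) * φ ((g * h)⁻¹ * x))
    have hcoc := congrArg Units.val (hc g h (h⁻¹ * (g⁻¹ * x)))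
    rw [mul_inv_cancel_left, Units.val_mul, Units.val_mul] at hcoc
    rw [mul_inv_rev, mul_assoc h⁻¹ g⁻¹, ← mul_assoc (c g _ : K), ← mul_assoc (c g h : K), hcoc,
      mul_comm (c h _ : K)]

theorem IsNondegenerate.isSquare_card [IsAlgClosed K] [CharZero K] [Finite G]
    (hc : IsTwoCocycle c) (hnd : IsNondegenerate c) : IsSquare (Nat.card G) :=
  let hu := isTwistedHom_twistedRegular hc
  hu.isTwistedHom_toSpan.isSquare_card hu.span_range_toSpan hnd

end TwistedHom

section AlgebraicallyClosed

variable {G K : Type*} [Group G] [Field K] [IsAlgClosed K] {c : G → G → Kˣ}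

theorem IsTwoCocycle.exists_normal_isIsotropic_card_eq [Group.IsNilpotent G]
    (hc : IsTwoCocycle c) {d : ℕ} (hd : d ≠ 0) (hdG : ∀ p : ℕ, p.Prime →
      (d.factorization p + 1).choose 2 ≤ (Nat.card G).factorization p) :
    ∃ A : Subgroup G, A.Normal ∧ Nat.card A = d ∧ IsIsotropic c A := by
  have hroot {n : ℕ} (hn : n ≠ 0) : Function.Surjective fun a : Kˣ ↦ a ^ n := fun a ↦ by
    obtain ⟨z, hz⟩ := IsAlgClosed.exists_pow_nat_eq (a : K) hn.pos
    have hz0 : z ≠ 0 := ne_zero_pow hn (hz ▸ a.ne_zero)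
    exact ⟨Units.mk0 z hz0, Units.ext hz⟩
  let := rootableByOfPowLeftSurj Kˣ ℕ hroot
  exact _root_.exists_normal_isIsotropic_card_eq (fun S _ ↦ isCyclic_subgroup_units S) hc hd hdG

theorem IsTwoCocycle.exists_normal_isIsotropic_card_eq_pow (hc : IsTwoCocycle c) {p k m : ℕ}
    (hp : p.Prime) (hG : Nat.card G = p ^ k) (hmk : (m + 1).choose 2 ≤ k) :
    ∃ A : Subgroup G, A.Normal ∧ Nat.card A = p ^ m ∧ IsIsotropic c A := by
  have := Fact.mk hp
  have : Finite G := Nat.finite_of_card_ne_zero (hG ▸ pow_ne_zero k hp.ne_zero)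
  have := (IsPGroup.of_card hG).isNilpotent
  refine hc.exists_normal_isIsotropic_card_eq (pow_ne_zero m hp.ne_zero) fun q _ ↦ ?_
  rw [hG, hp.factorization_pow, hp.factorization_pow]
  obtain rfl | hq := eq_or_ne q p
  · simpa only [Finsupp.single_eq_same] using hmk
  · simp only [Finsupp.single_eq_of_ne hq, Nat.choose_eq_zero_of_lt one_lt_two, zero_add, le_refl]

theorem choose_two_le_two_mul {v : ℕ} (hv : v < 4) : (v + 1).choose 2 ≤ 2 * v := by
  decide +revert

theorem IsNondegenerate.exists_normal_lagrangian [CharZero K] [Finite G] [Group.IsNilpotent G]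
    (hnd : IsNondegenerate c) (hc : IsTwoCocycle c)
    (hG : ∀ q : ℕ, q.Prime → ¬ q ^ 8 ∣ Nat.card G) :
    ∃ A : Subgroup G, A.Normal ∧ Nat.card A ^ 2 = Nat.card G ∧ IsIsotropic c A := by
  obtain ⟨e, he⟩ := hnd.isSquare_card hc
  rw [← pow_two] at he
  have he0 : e ≠ 0 := ne_zero_pow two_ne_zero (he ▸ Nat.card_pos.ne')
  have hlt (q : ℕ) (hq : q.Prime) : e.factorization q < 4 := by
    by_contra! hle
    have hdvd := pow_dvd_pow_of_dvd ((hq.pow_dvd_iff_le_factorization he0).2 hle) 2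
    exact hG q hq (by rwa [← pow_mul, ← he] at hdvd)
  obtain ⟨A, hAn, rfl, hA⟩ := hc.exists_normal_isIsotropic_card_eq he0 fun q hq ↦ by
    rw [he, Nat.factorization_pow]
    exact choose_two_le_two_mul (hlt q hq)
  exact ⟨A, hAn, he.symm, hA⟩

theorem normal_isotropic_small_pgroup_general (K : Type*) [Field K] [IsAlgClosed K] :
    (∀ (G : Type*) [Group G] (p k m : ℕ), p.Prime → (m + 1).choose 2 ≤ k → Nat.card G = p ^ k →
      ∀ c : G → G → Kˣ, IsTwoCocycle c →
        ∃ A : Subgroup G, A.Normal ∧ Nat.card A = p ^ m ∧ IsIsotropic c A) ∧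
    (∀ (G : Type*) [Group G] [Finite G] [CharZero K] [Group.IsNilpotent G],
      (∀ q : ℕ, q.Prime → ¬ q ^ 8 ∣ Nat.card G) →
      ∀ c : G → G → Kˣ, IsTwoCocycle c → IsNondegenerate c →
        ∃ A : Subgroup G, A.Normal ∧ Nat.card A ^ 2 = Nat.card G ∧ IsIsotropic c A) :=
  ⟨fun _ _ _ _ _ hp hmk hG _ hc ↦ hc.exists_normal_isIsotropic_card_eq_pow hp hG hmk,
    fun _ _ _ _ _ hG _ hc hnd ↦ hnd.exists_normal_lagrangian hc hG⟩

end AlgebraicallyClosed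

/-- For a group `G` of order `p^{2n}` with `n < 4` and any
`[c] ∈ H²(G, ℂ*)`, there is a normal isotropic subgroup of order `p^n`.
Consequently, every non-degenerate class on a finite nilpotent group whose order is
free of eighth powers admits a normal Lagrangian. -/
theorem normal_isotropic_small_pgroup :
    (∀ (G : Type) (_ : Group G) (_ : Fintype G) (p n : ℕ), p.Prime → n < 4 →
      Fintype.card G = p ^ (2 * n) →
      ∀ c : G → G → ℂˣ,
        (∀ g h k : G, c g h * c (g * h) k = c h k * c g (h * k)) →
        ∃ A : Subgroup G, A.Normal ∧ Nat.card A = p ^ n ∧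
          ∃ f : A → ℂˣ, ∀ a b : A, c (a : G) (b : G) = f a * f b * (f (a * b))⁻¹) ∧
    (∀ (G : Type) (_ : Group G) (_ : Fintype G), Group.IsNilpotent G →
      (∀ q : ℕ, q.Prime → ¬ q ^ 8 ∣ Fintype.card G) →
      ∀ c : G → G → ℂˣ,
        (∀ g h k : G, c g h * c (g * h) k = c h k * c g (h * k)) →
        (∀ x : G, x ≠ 1 → ∃ g : G, x * g = g * x ∧ c x g ≠ c g x) →
        ∃ A : Subgroup G, A.Normal ∧ (Nat.card A) ^ 2 = Fintype.card G ∧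
          ∃ f : A → ℂˣ, ∀ a b : A, c (a : G) (b : G) = f a * f b * (f (a * b))⁻¹) := by
  simp only [← Nat.card_eq_fintype_card]
  have hgen := normal_isotropic_small_pgroup_general ℂ
  exact ⟨fun G _ _ p n hp hn hG c hc ↦ hgen.1 G p _ n hp (choose_two_le_two_mul hn) hG c hc,
    fun G _ _ _ hG c hc hnd ↦ hgen.2 G hG c hc hnd⟩
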